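/- arXiv:2203.12850 — 4 statements merged into one kernel-verified Lean document; each statement's English description precedes it below -/
import Mathlib

section
/- Let r ≥ 1 be a natural number and let λ : Fin r → ℝ satisfy λ_k > 0 for all k and ∑_k λ_k = 1. Then r(r−1) · ∑_{k ≠ m} λ_k λ_m ≥ ((∑_k √(λ_k))² − 1)², where the sum ∑_{k ≠ m} runs over all ordered pairs (k,m) with k ≠ m. -/
/-!
Expanding `(∑ k, √(l k)) ^ 2` and removing the diagonal terms `∑ k, l k = 1` leaves the sum of
`√(l k) * √(l m)` over the `r * (r - 1)` ordered pairs with `k ≠ m`. Applying the Cauchy–Schwarz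
inequality to this sum and the constant `1` squares each summand to `l k * l m`.
-/

open Finset

section OffDiag

variable {ι : Type*} (s : Finset ι)

lemma sum_offDiag_eq_sum_sum_ite {M : Type*} [AddCommMonoid M] [DecidableEq ι] (f : ι → ι → M) :
    ∑ p ∈ s.offDiag, f p.1 p.2 = ∑ i ∈ s, ∑ j ∈ s, if i ≠ j then f i j else 0 := by
  rw [← sum_product', ← sum_filter]
  congr 1
  ext p
  simp [and_assoc]

lemma sq_sum_eq_sum_sq_add_sum_offDiag {R : Type*} [Semiring R] (f : ι → R) :
    (∑ i ∈ s, f i) ^ 2 = ∑ i ∈ s, f i ^ 2 + ∑ p ∈ s.offDiag, f p.1 * f p.2 := by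
  classical
  simp only [sq]
  rw [sum_mul_sum, ← sum_product', ← diag_union_offDiag, sum_union (disjoint_diag_offDiag s),
    sum_diag]

lemma cast_card_offDiag {R : Type*} [Ring R] : (#s.offDiag : R) = #s * (#s - 1) := by
  rw [offDiag_card, Nat.cast_sub (Nat.le_mul_self _), Nat.cast_mul, mul_sub_one]

lemma sq_sq_sum_sub_sum_sq_le {R : Type*} [CommRing R] [LinearOrder R] [IsStrictOrderedRing R]
    (f : ι → R) :
    ((∑ i ∈ s, f i) ^ 2 - ∑ i ∈ s, f i ^ 2) ^ 2
      ≤ #s * (#s - 1) * ∑ p ∈ s.offDiag, f p.1 ^ 2 * f p.2 ^ 2 :=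
  calc ((∑ i ∈ s, f i) ^ 2 - ∑ i ∈ s, f i ^ 2) ^ 2
      = (∑ p ∈ s.offDiag, f p.1 * f p.2) ^ 2 := by
        rw [sq_sum_eq_sum_sq_add_sum_offDiag, add_sub_cancel_left]
    _ ≤ #s.offDiag * ∑ p ∈ s.offDiag, (f p.1 * f p.2) ^ 2 := sq_sum_le_card_mul_sum_sq
    _ = #s * (#s - 1) * ∑ p ∈ s.offDiag, f p.1 ^ 2 * f p.2 ^ 2 := by
        simp only [cast_card_offDiag, mul_pow]

theorem offdiag_sum_ge_negativity_sq_general {l : ι → ℝ} (hl : ∀ i ∈ s, 0 ≤ l i) :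
    (#s : ℝ) * (#s - 1) * ∑ p ∈ s.offDiag, l p.1 * l p.2
      ≥ ((∑ i ∈ s, √(l i)) ^ 2 - ∑ i ∈ s, l i) ^ 2 := by
  have hsq : ∀ i ∈ s, √(l i) ^ 2 = l i := fun i hi => Real.sq_sqrt (hl i hi)
  have hpairs : ∑ p ∈ s.offDiag, √(l p.1) ^ 2 * √(l p.2) ^ 2 = ∑ p ∈ s.offDiag, l p.1 * l p.2 :=
    sum_congr rfl fun p hp => by
      obtain ⟨hfst, hsnd, -⟩ := mem_offDiag.mp hp
      rw [hsq _ hfst, hsq _ hsnd]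
  rw [← sum_congr rfl hsq, ← hpairs]
  exact sq_sq_sum_sub_sum_sq_le s fun i => √(l i)

end OffDiag

theorem offdiag_sum_ge_negativity_sq (r : ℕ) (hr : 1 ≤ r) (l : Fin r → ℝ)
    (hpos : ∀ k, 0 < l k) (hsum : ∑ k, l k = 1) :
    (r : ℝ) * ((r : ℝ) - 1) * (∑ k, ∑ m, if k ≠ m then l k * l m else 0)
      ≥ ((∑ k, Real.sqrt (l k)) ^ 2 - 1) ^ 2 := by
  rw [← sum_offDiag_eq_sum_sum_ite univ fun k m => l k * l m]
  simpa only [card_fin, hsum] using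
    offdiag_sum_ge_negativity_sq_general univ fun k _ => (hpos k).le
end

section
/- Let d ≥ 1 be a natural number and let λ : Fin d → ℝ satisfy λ_k ≥ 0 for all k and ∑_k λ_k = 1. Define the real symmetric matrix B indexed by (Fin d × Fin d) with entries B_{(k,m),(i,j)} = √(λ_k λ_m) if i = m and j = k, and B_{(k,m),(i,j)} = 0 otherwise. Then the sum over all indices of the absolute values of the eigenvalues of B equals (∑_k √(λ_k))². -/
/-!
The partial transpose `B` of `|ψ⟩⟨ψ|` maps `e_m ⊗ e_k` to a multiple of `e_k ⊗ e_m`, so `B ^ 2` is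
diagonal, with entries `‖c k‖ ^ 2 * ‖c m‖ ^ 2` for `ψ = ∑ c k • e_k ⊗ e_k`. Comparing characteristic
polynomials, the squares of the eigenvalues of `B` are, with multiplicity, these entries. Taking
square roots, the trace norm is `∑_{k,m} ‖c k‖ * ‖c m‖ = (∑ ‖c k‖) ^ 2`.
-/

/-- The partial transpose of the pure state `|ψ⟩⟨ψ|`, `ψ = ∑ √(λ k) e_k ⊗ e_k`,
in the product basis. -/
noncomputable def partialTransposeMat (d : ℕ) (l : Fin d → ℝ) :
    Matrix (Fin d × Fin d) (Fin d × Fin d) ℝ :=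
  fun p q => if q.1 = p.2 ∧ q.2 = p.1 then Real.sqrt (l p.1 * l p.2) else 0

section Eigenvalues

open Matrix

lemma roots_charpoly_diagonal {n R : Type*} [Fintype n] [DecidableEq n] [CommRing R] [IsDomain R]
    (v : n → R) : (diagonal v).charpoly.roots = Finset.univ.val.map v := by
  rw [charpoly_diagonal, ← Polynomial.roots_multiset_prod_X_sub_C (Finset.univ.val.map v),
    Multiset.map_map]
  rfl

variable {n 𝕜 : Type*} [Fintype n] [DecidableEq n] [RCLike 𝕜] {A : Matrix n n 𝕜}

lemma roots_charpoly_pow_eq_eigenvalues_pow (hA : A.IsHermitian) (k : ℕ) :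
    (A ^ k).charpoly.roots = Finset.univ.val.map fun i => ((hA.eigenvalues i ^ k : ℝ) : 𝕜) := by
  rw [← cfc_pow_id (R := ℝ) A k hA.isSelfAdjoint, hA.charpoly_cfc_eq, ← charpoly_diagonal,
    roots_charpoly_diagonal]

lemma sum_abs_eigenvalues_of_sq_eq_diagonal (hA : A.IsHermitian) {v : n → ℝ}
    (hv : A ^ 2 = diagonal fun i => (v i : 𝕜)) :
    ∑ i, |hA.eigenvalues i| = ∑ i, √(v i) := by
  have roots_eq : (Finset.univ.val.map fun i => ((hA.eigenvalues i ^ 2 : ℝ) : 𝕜)) =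
      Finset.univ.val.map fun i => (v i : 𝕜) := by
    rw [← roots_charpoly_pow_eq_eigenvalues_pow, hv, roots_charpoly_diagonal]
  have sum_sqrt_eq := congrArg (fun s => (s.map fun z => √(RCLike.re z)).sum) roots_eq
  simpa only [Finset.sum, Multiset.map_map, Function.comp_def, RCLike.ofReal_re,
    Real.sqrt_sq_eq_abs] using sum_sqrt_eq

end Eigenvalues

section PartialTranspose

open Matrix

/-- The partial transpose of a matrix on a bipartite system `ι × κ`: the transposition is applied
to the second factor. -/
def partialTranspose {ι κ R : Type*} (M : Matrix (ι × κ) (ι × κ) R) :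
    Matrix (ι × κ) (ι × κ) R :=
  of fun p q => M (p.1, q.2) (q.1, p.2)

/-- The density matrix `|ψ⟩⟨ψ|` of a pure state; `ψ` is not required to be normalized. -/
def pureDensity {n R : Type*} [Mul R] [Star R] (ψ : n → R) : Matrix n n R :=
  vecMulVec ψ (star ψ)

/-- The bipartite vector `∑ c k • e_k ⊗ e_k` with Schmidt coefficients `c`, which may carry phases,
in coordinates with respect to the product basis. -/
def schmidtVector {ι R : Type*} [DecidableEq ι] [Zero R] (c : ι → R) : ι × ι → R :=
  fun p => if p.1 = p.2 then c p.1 else 0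

lemma isHermitian_partialTranspose {ι κ R : Type*} [Star R] {M : Matrix (ι × κ) (ι × κ) R}
    (hM : M.IsHermitian) : (partialTranspose M).IsHermitian :=
  IsHermitian.ext fun p q => hM.apply (p.1, q.2) (q.1, p.2)

lemma isHermitian_pureDensity {n R : Type*} [Mul R] [StarMul R] (ψ : n → R) :
    (pureDensity ψ).IsHermitian := by
  rw [IsHermitian, pureDensity, conjTranspose_vecMulVec, star_star]

variable {ι : Type*} [DecidableEq ι]

lemma partialTranspose_pureDensity_schmidtVector_apply {R : Type*}
    [NonUnitalNonAssocSemiring R] [StarRing R] (c : ι → R) (p q : ι × ι) :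
    partialTranspose (pureDensity (schmidtVector c)) p q =
      if q = p.swap then c p.1 * star (c p.2) else 0 := by
  obtain ⟨k, m⟩ := p
  obtain ⟨i, j⟩ := q
  simp only [partialTranspose, pureDensity, schmidtVector, of_apply, vecMulVec_apply,
    Pi.star_apply, Prod.swap_prod_mk, Prod.mk.injEq, eq_comm (a := k)]
  by_cases him : i = m <;> by_cases hjk : j = k <;> simp [him, hjk]

variable [Fintype ι]

lemma partialTranspose_pureDensity_schmidtVector_sq {R : Type*} [CommSemiring R] [StarRing R]
    (c : ι → R) :
    partialTranspose (pureDensity (schmidtVector c)) ^ 2 =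
      diagonal fun p => (c p.1 * star (c p.1)) * (c p.2 * star (c p.2)) := by
  ext p q
  simp only [sq, mul_apply, partialTranspose_pureDensity_schmidtVector_apply, ite_mul, zero_mul,
    Finset.sum_ite_eq', Finset.mem_univ, if_true, Prod.swap_swap, Prod.fst_swap, Prod.snd_swap]
  obtain rfl | hpq := eq_or_ne p q
  · rw [if_pos rfl, diagonal_apply_eq]
    ring
  · rw [if_neg hpq.symm, mul_zero, diagonal_apply_ne _ hpq]

end PartialTranspose

theorem trace_norm_partial_transpose_general {ι 𝕜 : Type*} [Fintype ι] [DecidableEq ι] [RCLike 𝕜]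
    (c : ι → 𝕜) :
    ∑ i, |(isHermitian_partialTranspose
      (isHermitian_pureDensity (schmidtVector c))).eigenvalues i| = (∑ k, ‖c k‖) ^ 2 := by
  have sq_eq_diagonal : partialTranspose (pureDensity (schmidtVector c)) ^ 2 =
      Matrix.diagonal fun p => (((‖c p.1‖ * ‖c p.2‖) ^ 2 : ℝ) : 𝕜) := by
    simp only [partialTranspose_pureDensity_schmidtVector_sq, RCLike.star_def, RCLike.mul_conj,
      ← mul_pow, RCLike.ofReal_pow, RCLike.ofReal_mul]
  calc _ = ∑ p : ι × ι, √((‖c p.1‖ * ‖c p.2‖) ^ 2) :=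
        sum_abs_eigenvalues_of_sq_eq_diagonal _ sq_eq_diagonal
    _ = ∑ p : ι × ι, ‖c p.1‖ * ‖c p.2‖ :=
        Finset.sum_congr rfl fun p _ => Real.sqrt_sq (by positivity)
    _ = (∑ k, ‖c k‖) ^ 2 := by
        rw [sq, Finset.sum_mul_sum, Fintype.sum_prod_type]

lemma partialTransposeMat_eq_partialTranspose {d : ℕ} {l : Fin d → ℝ} (hl : ∀ k, 0 ≤ l k) :
    partialTransposeMat d l =
      partialTranspose (pureDensity (schmidtVector fun k => √(l k))) := by
  ext p q
  simp only [partialTransposeMat, partialTranspose_pureDensity_schmidtVector_apply, star_trivial,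
    Real.sqrt_mul (hl _), Prod.ext_iff, Prod.fst_swap, Prod.snd_swap]

theorem trace_norm_partial_transpose (d : ℕ) (hd : 1 ≤ d) (l : Fin d → ℝ)
    (hnonneg : ∀ k, 0 ≤ l k) (hsum : ∑ k, l k = 1)
    (hB : (partialTransposeMat d l).IsHermitian) :
    ∑ i, |hB.eigenvalues i| = (∑ k, Real.sqrt (l k)) ^ 2 := by
  simpa only [partialTransposeMat_eq_partialTranspose hnonneg, Real.norm_eq_abs,
    abs_of_nonneg (Real.sqrt_nonneg _)] using trace_norm_partial_transpose_general fun k => √(l k)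
end

section
/- For every α > 0, with λ₊(α) = (1+exp(−2α²))²/(2(1+exp(−4α²))) and λ₋(α) = (1−exp(−2α²))²/(2(1+exp(−4α²))), one has √(1 − λ₊(α)² − λ₋(α)²) = (1/√2) · (1 − exp(−4α²))/(1 + exp(−4α²)); in particular this quantity equals √2 · ((√(λ₊(α)) + √(λ₋(α)))² − 1)/2. -/
/-!
Two Schmidt weights `p, q ≥ 0` with `p + q = 1` satisfy `1 - p² - q² = 2pq` and
`(√p + √q)² - 1 = 2√(pq)`, so the concurrence is `√2` times the negativity for every state of
Schmidt rank at most two. For the entangled coherent states everything is a rational function of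
the overlap `x = exp (-2α²)` of the coherent states `|α⟩` and `|-α⟩`, since `exp (-4α²) = x²`, and
the product of the two weights is a perfect square in `x`.
-/

open Real

/-- The concurrence `√(1 - ∑ λₖ²)` of a pure bipartite state of Schmidt rank at most two, as a
function of its two squared Schmidt coefficients. -/
noncomputable def rankTwoConcurrence (p q : ℝ) : ℝ :=
  √(1 - p ^ 2 - q ^ 2)

/-- The negativity `((∑ √λₖ)² - 1) / 2` of a pure bipartite state of Schmidt rank at most two, as a
function of its two squared Schmidt coefficients. -/
noncomputable def rankTwoNegativity (p q : ℝ) : ℝ :=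
  ((√p + √q) ^ 2 - 1) / 2

/-- The squared Schmidt coefficient `λ₊` of an entangled coherent state, as a function of the
overlap `x` of the coherent states it superposes; `λ₋` is its value at `-x`. -/
noncomputable def coherentSchmidtWeight (x : ℝ) : ℝ :=
  (1 + x) ^ 2 / (2 * (1 + x ^ 2))

section RankTwo

variable {p q : ℝ}

theorem rankTwoConcurrence_eq_sqrt_two_mul_sqrt_mul (hpq : p + q = 1) :
    rankTwoConcurrence p q = √2 * √(p * q) := by
  have purity_defect : 1 - p ^ 2 - q ^ 2 = 2 * (p * q) := by
    linear_combination -(p + q + 1) * hpq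
  rw [rankTwoConcurrence, purity_defect, sqrt_mul zero_le_two]

theorem rankTwoNegativity_eq_sqrt_mul (hp : 0 ≤ p) (hq : 0 ≤ q) (hpq : p + q = 1) :
    rankTwoNegativity p q = √(p * q) := by
  rw [rankTwoNegativity, add_sq, sq_sqrt hp, sq_sqrt hq, sqrt_mul hp]
  linear_combination hpq / 2

theorem rankTwoConcurrence_eq_sqrt_two_mul_rankTwoNegativity
    (hp : 0 ≤ p) (hq : 0 ≤ q) (hpq : p + q = 1) :
    rankTwoConcurrence p q = √2 * rankTwoNegativity p q := by
  rw [rankTwoConcurrence_eq_sqrt_two_mul_sqrt_mul hpq, rankTwoNegativity_eq_sqrt_mul hp hq hpq]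

end RankTwo

theorem coherentSchmidtWeight_nonneg (x : ℝ) : 0 ≤ coherentSchmidtWeight x := by
  unfold coherentSchmidtWeight
  positivity

theorem coherentSchmidtWeight_neg (x : ℝ) :
    coherentSchmidtWeight (-x) = (1 - x) ^ 2 / (2 * (1 + x ^ 2)) := by
  rw [coherentSchmidtWeight, neg_sq, ← sub_eq_add_neg]

theorem coherentSchmidtWeight_add_neg (x : ℝ) :
    coherentSchmidtWeight x + coherentSchmidtWeight (-x) = 1 := by
  rw [coherentSchmidtWeight_neg, coherentSchmidtWeight]
  field_simp
  ring

theorem coherentSchmidtWeight_mul_neg (x : ℝ) :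
    coherentSchmidtWeight x * coherentSchmidtWeight (-x) =
      ((1 - x ^ 2) / (1 + x ^ 2) / 2) ^ 2 := by
  rw [coherentSchmidtWeight_neg, coherentSchmidtWeight]
  field_simp
  ring

theorem rankTwoConcurrence_coherentSchmidtWeight {x : ℝ} (hx : x ^ 2 ≤ 1) :
    rankTwoConcurrence (coherentSchmidtWeight x) (coherentSchmidtWeight (-x)) =
      1 / √2 * ((1 - x ^ 2) / (1 + x ^ 2)) := by
  have half_ratio_nonneg : 0 ≤ (1 - x ^ 2) / (1 + x ^ 2) / 2 := by
    have := sub_nonneg.2 hx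
    positivity
  rw [rankTwoConcurrence_eq_sqrt_two_mul_sqrt_mul (coherentSchmidtWeight_add_neg x),
    coherentSchmidtWeight_mul_neg, sqrt_sq half_ratio_nonneg, ← sqrt_div_self']
  ring

theorem concurrence_entangled_coherent (α : ℝ) (hα : 0 < α) :
    let lp := (1 + Real.exp (-2 * α ^ 2)) ^ 2 / (2 * (1 + Real.exp (-4 * α ^ 2)))
    let lm := (1 - Real.exp (-2 * α ^ 2)) ^ 2 / (2 * (1 + Real.exp (-4 * α ^ 2)))
    Real.sqrt (1 - lp ^ 2 - lm ^ 2)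
        = (1 / Real.sqrt 2) *
            ((1 - Real.exp (-4 * α ^ 2)) / (1 + Real.exp (-4 * α ^ 2))) ∧
    Real.sqrt (1 - lp ^ 2 - lm ^ 2)
        = Real.sqrt 2 * (((Real.sqrt lp + Real.sqrt lm) ^ 2 - 1) / 2) := by
  intro lp lm
  set x := exp (-2 * α ^ 2) with x_def
  have exp_eq_sq : exp (-4 * α ^ 2) = x ^ 2 := by
    rw [x_def, ← exp_nat_mul]
    ring_nf
  have sq_le_one : x ^ 2 ≤ 1 := by
    rw [← exp_eq_sq, exp_le_one_iff]
    linarith [sq_nonneg α]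
  have lp_eq : lp = coherentSchmidtWeight x := by
    rw [coherentSchmidtWeight, ← exp_eq_sq]
  have lm_eq : lm = coherentSchmidtWeight (-x) := by
    rw [coherentSchmidtWeight_neg, ← exp_eq_sq]
  rw [lp_eq, lm_eq, exp_eq_sq]
  exact ⟨rankTwoConcurrence_coherentSchmidtWeight sq_le_one,
    rankTwoConcurrence_eq_sqrt_two_mul_rankTwoNegativity (coherentSchmidtWeight_nonneg x)
      (coherentSchmidtWeight_nonneg (-x)) (coherentSchmidtWeight_add_neg x)⟩
end

section
/- For every α > 0, with λ₊(α) = (1+exp(−2α²))²/(2(1+exp(−4α²))) and λ₋(α) = (1−exp(−2α²))²/(2(1+exp(−4α²))), one has 2(√(λ₊(α)) + √(λ₋(α)))² − 1 = (3 − exp(−4α²))/(1 + exp(−4α²)), and this value lies strictly between 1 and 3. -/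
/-!
Both Schmidt coefficients are squares over one common denominator. Since `exp (-2α²) ≤ 1`, the sum
of their roots is therefore free of `exp (-2α²)`, and the bound depends on `y = exp (-4α²)` alone:
it decreases from `3` at `y = 0` to `1` at `y = 1`.
-/

section SchmidtCoefficients

variable {a b x y : ℝ}

theorem sqrt_add_sq_div_add_sqrt_sub_sq_div (h : |b| ≤ a) (c : ℝ) :
    √((a + b) ^ 2 / c) + √((a - b) ^ 2 / c) = 2 * a / √c := by
  obtain ⟨hneg, hle⟩ := abs_le.mp h
  have sqrt_add_sq : √((a + b) ^ 2) = a + b := Real.sqrt_sq (by linarith)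
  have sqrt_sub_sq : √((a - b) ^ 2) = a - b := Real.sqrt_sq (sub_nonneg.mpr hle)
  rw [Real.sqrt_div (sq_nonneg _), Real.sqrt_div (sq_nonneg _), sqrt_add_sq, sqrt_sub_sq]
  ring

theorem two_mul_sqrt_add_sqrt_sq_sub_one (hx : |x| ≤ 1) (hy : -1 < y) :
    2 * (√((1 + x) ^ 2 / (2 * (1 + y))) + √((1 - x) ^ 2 / (2 * (1 + y)))) ^ 2 - 1
      = (3 - y) / (1 + y) := by
  have one_add_pos : 0 < 1 + y := by linarith
  calc
    _ = 2 * (2 * 1 / √(2 * (1 + y))) ^ 2 - 1 := by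
      rw [sqrt_add_sq_div_add_sqrt_sub_sq_div hx]
    _ = 2 * ((2 * 1) ^ 2 / (2 * (1 + y))) - 1 := by
      rw [div_pow, Real.sq_sqrt (by positivity)]
    _ = (3 - y) / (1 + y) := by
      field_simp
      ring

end SchmidtCoefficients

section OrderedField

variable {K : Type*} [Field K] [LinearOrder K] [IsStrictOrderedRing K] {y : K}

theorem one_lt_three_sub_div_one_add_iff (hy : -1 < y) : 1 < (3 - y) / (1 + y) ↔ y < 1 := by
  rw [one_lt_div (by linarith)]
  constructor <;> intro h <;> linarith

theorem three_sub_div_one_add_lt_three_iff (hy : -1 < y) : (3 - y) / (1 + y) < 3 ↔ 0 < y := by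
  rw [div_lt_iff₀ (by linarith)]
  constructor <;> intro h <;> linarith

end OrderedField

theorem exp_neg_mul_sq_lt_one {c a : ℝ} (hc : 0 < c) (ha : a ≠ 0) :
    Real.exp (-c * a ^ 2) < 1 :=
  Real.exp_lt_one_iff.mpr (mul_neg_of_neg_of_pos (neg_neg_of_pos hc) (sq_pos_of_ne_zero ha))

theorem bell_violation_bound_entangled_coherent (α : ℝ) (hα : 0 < α) :
    let lp := (1 + Real.exp (-2 * α ^ 2)) ^ 2 / (2 * (1 + Real.exp (-4 * α ^ 2)))
    let lm := (1 - Real.exp (-2 * α ^ 2)) ^ 2 / (2 * (1 + Real.exp (-4 * α ^ 2)))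
    2 * (Real.sqrt lp + Real.sqrt lm) ^ 2 - 1
        = (3 - Real.exp (-4 * α ^ 2)) / (1 + Real.exp (-4 * α ^ 2)) ∧
    1 < (3 - Real.exp (-4 * α ^ 2)) / (1 + Real.exp (-4 * α ^ 2)) ∧
    (3 - Real.exp (-4 * α ^ 2)) / (1 + Real.exp (-4 * α ^ 2)) < 3 := by
  intro lp lm
  have abs_exp_le_one : |Real.exp (-2 * α ^ 2)| ≤ 1 := by
    rw [Real.abs_exp]
    exact (exp_neg_mul_sq_lt_one two_pos hα.ne').le
  have exp_pos : 0 < Real.exp (-4 * α ^ 2) := Real.exp_pos _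
  have exp_lt_one : Real.exp (-4 * α ^ 2) < 1 := exp_neg_mul_sq_lt_one four_pos hα.ne'
  have neg_one_lt_exp : -1 < Real.exp (-4 * α ^ 2) := neg_one_lt_zero.trans exp_pos
  exact ⟨two_mul_sqrt_add_sqrt_sq_sub_one abs_exp_le_one neg_one_lt_exp,
    (one_lt_three_sub_div_one_add_iff neg_one_lt_exp).mpr exp_lt_one,
    (three_sub_div_one_add_lt_three_iff neg_one_lt_exp).mpr exp_pos⟩
end
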